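/- For every γ ∈ J_k^{reg}(1,n) the homomorphism φ(γ) has rank k, and for every ψ ∈ 𝔾_k = J_k^{reg}(1,1) one has im φ(γ ∘ ψ) = im φ(γ). Consequently the assignment γ ↦ im φ(γ) descends to an injective map φ^{Gr} : J_k^{reg}(1,n)/𝔾_k ↪ Grass(k, Sym^{≤k}ℂ^n), and the assignment sending γ to the flag (im(φ(γ)|_{span(e_1,…,e_j)}))_{j=1}^k descends to an injective map φ^{Flag} : J_k^{reg}(1,n)/𝔾_k ↪ Flag_k(Sym^{≤k}ℂ^n); moreover φ^{Gr} = π_k ∘ φ^{Flag}, where π_k sends a full flag of k subspaces to its k-dimensional member. -/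

import Mathlib

open scoped BigOperators

namespace JetPaper

/-- Monomials in `n` variables of degree between `1` and `k`:
these index the standard basis of `Sym^{≤k}ℂ^n = ⊕_{l=1}^k Sym^l ℂ^n`. -/
def Mon (n k : ℕ) : Type := {m : Fin n → ℕ // 0 < ∑ i, m i ∧ ∑ i, m i ≤ k}

noncomputable instance (n k : ℕ) : Fintype (Mon n k) :=
  Fintype.ofInjective
    (fun m : Mon n k => (fun i => (⟨m.1 i, Nat.lt_succ_of_le
        ((Finset.single_le_sum (fun _ _ => Nat.zero_le _) (Finset.mem_univ i)).trans
          m.2.2)⟩ : Fin (k + 1))))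
    (fun _ _ h => Subtype.ext (funext fun i => congrArg Fin.val (congrFun h i)))

/-- The matrix coefficient of the `GL(n)`-action on `Sym^{≤k}ℂ^n` induced by the standard
action on `ℂ^n` (`g·e_i = ∑_j g_{ji} e_j`), in the monomial basis:
`symMat g m m'` is the coefficient of the monomial `m` in the image of the monomial `m'`. -/
noncomputable def symMat {n k : ℕ} (g : Matrix (Fin n) (Fin n) ℂ) (m m' : Mon n k) : ℂ :=
  MvPolynomial.coeff (Finsupp.equivFunOnFinite.symm m.1)
    (∏ i : Fin n, (∑ j : Fin n, g j i • MvPolynomial.X j) ^ (m'.1 i))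

/-- The induced action of `g ∈ GL(n)` on `(Sym^{≤k}ℂ^n)^{⊗k}`, in coordinates.
Elements of the `k`-th tensor power of `Sym^{≤k}ℂ^n` are recorded by their coordinates
in the basis indexed by `k`-tuples of monomials; `⋀^k(Sym^{≤k}ℂ^n)` is realised inside the
tensor power as the space of antisymmetric tensors. -/
noncomputable def actV {n k : ℕ} (g : Matrix (Fin n) (Fin n) ℂ)
    (T : (Fin k → Mon n k) → ℂ) : (Fin k → Mon n k) → ℂ :=
  fun mf => ∑ mf' : Fin k → Mon n k, (∏ i, symMat g (mf i) (mf' i)) * T mf'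

/-- The wedge product `v₁ ∧ ⋯ ∧ v_k` of `k` elements of `Sym^{≤k}ℂ^n`, realised as an
antisymmetric tensor in `(Sym^{≤k}ℂ^n)^{⊗k}` (in coordinates). -/
noncomputable def wedge {n k : ℕ} (v : Fin k → (Mon n k → ℂ)) : (Fin k → Mon n k) → ℂ :=
  fun mf => ∑ σ : Equiv.Perm (Fin k), ((Equiv.Perm.sign σ : ℤ) : ℂ) * ∏ i, v (σ i) (mf i)

/-- The `j`-th coordinate polynomial of `φ(γ) ∈ Hom(ℂ^k, Sym^{≤k}ℂ^n)` for
`γ ∈ Hom(ℂ^k, ℂ^n)`: the sum over all `s ≥ 1` and all ordered `s`-tuples `(i₁,…,i_s)` of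
positive integers with `i₁+⋯+i_s = j` of the product (in the symmetric algebra,
realised as the polynomial ring in `n` variables) of the `i₁`-th, …, `i_s`-th columns
of `γ`.  A tuple of length `s = l+1` is recorded as a function `a : Fin (l+1) → Fin k`,
the value `a t` standing for the positive integer `(a t) + 1`. -/
noncomputable def colPoly {n k : ℕ} (γ : Matrix (Fin n) (Fin k) ℂ) (j : Fin k) :
    MvPolynomial (Fin n) ℂ :=
  ∑ l : Fin k, ∑ a : Fin (l.val + 1) → Fin k,
    if (∑ t, ((a t).val + 1)) = j.val + 1 then
      ∏ t, (∑ i : Fin n, γ i (a t) • MvPolynomial.X i)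
    else 0

/-- The map `φ : Hom(ℂ^k,ℂ^n) → Hom(ℂ^k, Sym^{≤k}ℂ^n)` as a matrix in the monomial basis:
rows are indexed by monomials, columns by `Fin k`. -/
noncomputable def phiMat {n k : ℕ} (γ : Matrix (Fin n) (Fin k) ℂ) :
    Matrix (Mon n k) (Fin k) ℂ :=
  fun m j => MvPolynomial.coeff (Finsupp.equivFunOnFinite.symm m.1) (colPoly γ j)

/-- `φ^{Proj}` at the level of vectors: the wedge `φ(γ)e₁ ∧ ⋯ ∧ φ(γ)e_k` of the columns of
`φ(γ)`, an element of `⋀^k(Sym^{≤k}ℂ^n)` in coordinates. -/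
noncomputable def wedgePhi {n k : ℕ} (γ : Matrix (Fin n) (Fin k) ℂ) :
    (Fin k → Mon n k) → ℂ :=
  wedge (fun j m => phiMat γ m j)

/-- The matrix of the reparametrization jet with parameters `α = (α₁,…,α_k)`
(`α_s` is recorded as `α ⟨s-1⟩`): the `(i,j)` entry is
`∑_{s₁+⋯+s_i = j, s_l ≥ 1} α_{s₁}⋯α_{s_i}` (rows and columns of `Fin k` represent
the integers `1,…,k`). -/
noncomputable def repMat (k : ℕ) (α : Fin k → ℂ) : Matrix (Fin k) (Fin k) ℂ :=
  fun i j => ∑ a : Fin (i.val + 1) → Fin k,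
    if (∑ t, ((a t).val + 1)) = j.val + 1 then ∏ t, α (a t) else 0

/-- The reparametrization group `𝔾_k ⊂ GL(k,ℂ)`. -/
def Gset (k : ℕ) : Set (Matrix (Fin k) (Fin k) ℂ) :=
  {g | ∃ α : Fin k → ℂ, (∀ i : Fin k, i.val = 0 → α i ≠ 0) ∧ g = repMat k α}

/-- The unipotent radical `𝕌_k ⊂ 𝔾_k`: the matrices `repMat k α` with `α₁ = 1`. -/
def Uset (k : ℕ) : Set (Matrix (Fin k) (Fin k) ℂ) :=
  {g | ∃ α : Fin k → ℂ, (∀ i : Fin k, i.val = 0 → α i = 1) ∧ g = repMat k α}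

/-- The distinguished point
`p_k = e₁ ∧ (e₂ + e₁²) ∧ ⋯ ∧ (∑_{i₁+⋯+i_s = k} e_{i₁}⋯e_{i_s}) ∈ ⋀^k(Sym^{≤k}ℂ^k)`,
i.e. the wedge of the columns of `φ(1)`. -/
noncomputable def pkVec (k : ℕ) : (Fin k → Mon k k) → ℂ :=
  wedgePhi (1 : Matrix (Fin k) (Fin k) ℂ)


/-- The partial flag `(im(φ(γ)|_{span(e₁,…,e_{j+1})}))_j`: the `(j+1)`-st member is the span
of the first `j+1` columns of `φ(γ)`. -/
noncomputable def flagPhi {n k : ℕ} (γ : Matrix (Fin n) (Fin k) ℂ) (j : Fin k) :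
    Submodule ℂ (Mon n k → ℂ) :=
  Submodule.span ℂ {v | ∃ i : Fin k, i ≤ j ∧ v = fun m => phiMat γ m i}

/-!
For curves in a line, `φ` is the matrix `jetMatrix v` of precomposition with `v`: associativity of
composition makes `jetMatrix` multiplicative, and it is upper triangular with diagonal entries
`v₁, v₁², …, v₁^k`. A linear form `x` on `ℂ^n` induces a graded map
`Sym^{≤k} ℂ^n → Sym^{≤k} ℂ = ℂ^k` which carries `φ(γ)` to `φ(x ∘ γ)`, and `φ(x ∘ γ)` is invertible
as soon as `x(γ') ≠ 0`. Hence `φ(γ)` has rank `k`. If `im φ(γ₁) ⊆ im φ(γ₂)`, then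
`φ(γ₁) = φ(γ₂) B`, so `φ(x ∘ γ₁) = φ(x ∘ γ₂) B` for every `x`: the first rows give `γ₁ = γ₂ B`,
while for a single `x` with `x(γ₁') ≠ 0` this exhibits `B` as a quotient of elements of `𝔾_k`.
-/

section Jet

open Matrix Polynomial

variable {R S : Type*} [CommRing R] [CommRing S] {k : ℕ}

/-- The `k`-jet at `0` of a polynomial without constant term, as the vector of its coefficients of
degrees `1, …, k`; as for `repMat`, `i : Fin k` stands for the degree `i + 1`. -/
def jetCoeff (k : ℕ) (p : R[X]) : Fin k → R := fun i => p.coeff (i + 1)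

/-- The polynomial `v₁ t + ⋯ + v_k t^k` representing the `k`-jet with coefficient vector `v`. -/
noncomputable def jetPoly (v : Fin k → R) : R[X] := ∑ i : Fin k, C (v i) * X ^ (i + 1 : ℕ)

/-- The matrix whose `l`-th row is the `k`-jet of the `l`-th power of the curve `v` (both counted
from `1`): it is `φ(v)` for a curve `v` in a line, and the action of `v` on jets by
precomposition. -/
noncomputable def jetMatrix (v : Fin k → R) : Matrix (Fin k) (Fin k) R :=
  Matrix.of fun l => jetCoeff k (jetPoly v ^ (l + 1 : ℕ))

lemma row_jetMatrix (v : Fin k → R) (l : Fin k) :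
    (jetMatrix v).row l = jetCoeff k (jetPoly v ^ (l + 1 : ℕ)) := rfl

lemma X_dvd_jetPoly (v : Fin k → R) : X ∣ jetPoly v :=
  Finset.dvd_sum fun _ _ => (dvd_pow_self X (Nat.succ_ne_zero _)).mul_left _

lemma jetCoeff_jetPoly (v : Fin k → R) : jetCoeff k (jetPoly v) = v := by
  ext j
  simp [jetCoeff, jetPoly, coeff_X_pow, Fin.val_inj]

lemma jetPoly_map (f : R →+* S) (v : Fin k → R) : (jetPoly v).map f = jetPoly (f ∘ v) := by
  simp [jetPoly, Polynomial.map_sum]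

lemma jetCoeff_eq_of_X_pow_dvd_sub {p q : R[X]} (h : X ^ (k + 1) ∣ p - q) :
    jetCoeff k p = jetCoeff k q := by
  ext j
  rw [← sub_eq_zero]
  simpa [jetCoeff] using X_pow_dvd_iff.mp h (j + 1) (by omega)

lemma X_pow_dvd_sub_jetPoly_jetCoeff {p : R[X]} (hp : X ∣ p) :
    X ^ (k + 1) ∣ p - jetPoly (jetCoeff k p) := by
  rw [X_pow_dvd_iff]
  rintro (_ | d) hd
  · rw [coeff_sub, X_dvd_iff.mp hp, X_dvd_iff.mp (X_dvd_jetPoly _), sub_zero]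
  · have := congrFun (jetCoeff_jetPoly (jetCoeff k p)) ⟨d, by omega⟩
    rw [coeff_sub, sub_eq_zero]
    exact this.symm

lemma row_jetMatrix_jetCoeff {p : R[X]} (hp : X ∣ p) (l : Fin k) :
    (jetMatrix (jetCoeff k p)).row l = jetCoeff k (p ^ (l + 1 : ℕ)) :=
  .symm <| jetCoeff_eq_of_X_pow_dvd_sub <|
    (X_pow_dvd_sub_jetPoly_jetCoeff hp).trans (sub_dvd_pow_sub_pow _ _ _)

lemma jetCoeff_jetPoly_comp (v w : Fin k → R) :
    jetCoeff k ((jetPoly v).comp (jetPoly w)) = v ᵥ* jetMatrix w := by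
  ext j
  simp [jetPoly, jetCoeff, jetMatrix, vecMul, dotProduct, Polynomial.comp, eval₂_finsetSum]

lemma jetCoeff_comp {p : R[X]} (hp : X ∣ p) (w : Fin k → R) :
    jetCoeff k (p.comp (jetPoly w)) = jetCoeff k p ᵥ* jetMatrix w := by
  rw [← jetCoeff_jetPoly_comp]
  refine jetCoeff_eq_of_X_pow_dvd_sub ?_
  obtain ⟨q, hq⟩ := X_pow_dvd_sub_jetPoly_jetCoeff (k := k) hp
  rw [← sub_comp, hq, mul_comp, X_pow_comp]
  exact (pow_dvd_pow_of_dvd (X_dvd_jetPoly w) _).mul_right _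

theorem jetMatrix_mul (v w : Fin k → R) :
    jetMatrix v * jetMatrix w = jetMatrix (v ᵥ* jetMatrix w) := by
  have hvw : X ∣ (jetPoly v).comp (jetPoly w) := by
    obtain ⟨q, hq⟩ := X_dvd_jetPoly v
    rw [hq, mul_comp, X_comp]
    exact (X_dvd_jetPoly w).mul_right _
  refine Matrix.ext_row fun l => ?_
  calc (jetMatrix v * jetMatrix w).row l
      = jetCoeff k (jetPoly v ^ (l + 1 : ℕ)) ᵥ* jetMatrix w := mul_apply_eq_vecMul _ _ _
    _ = jetCoeff k ((jetPoly v).comp (jetPoly w) ^ (l + 1 : ℕ)) := by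
        rw [← jetCoeff_comp (dvd_pow (X_dvd_jetPoly v) (Nat.succ_ne_zero _)), pow_comp]
    _ = (jetMatrix (v ᵥ* jetMatrix w)).row l := by
        rw [← row_jetMatrix_jetCoeff hvw, jetCoeff_jetPoly_comp]

lemma jetMatrix_map (f : R →+* S) (v : Fin k → R) :
    (jetMatrix v).map f = jetMatrix (f ∘ v) := by
  ext l j
  simp [jetMatrix, jetCoeff, ← jetPoly_map, ← Polynomial.map_pow]

lemma jetMatrix_apply_eq_sum (v : Fin k → R) (l j : Fin k) :
    jetMatrix v l j = ∑ a : Fin (l + 1) → Fin k,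
      if ∑ t, ((a t : ℕ) + 1) = j + 1 then ∏ t, v (a t) else 0 := by
  have h : jetPoly v ^ (l + 1 : ℕ) =
      ∑ a : Fin (l + 1) → Fin k, C (∏ t, v (a t)) * X ^ ∑ t, ((a t : ℕ) + 1) := by
    rw [← Fin.prod_const, jetPoly, Fintype.prod_sum]
    simp_rw [Finset.prod_mul_distrib, Finset.prod_pow_eq_pow_sum, map_prod]
  rw [jetMatrix, of_apply, jetCoeff, h]
  simp only [finsetSum_coeff, coeff_C_mul_X_pow, eq_comm]

lemma isHomogeneous_jetMatrix_apply {σ : Type*} {d : ℕ} {v : Fin k → MvPolynomial σ R}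
    (hv : ∀ i, (v i).IsHomogeneous d) (l j : Fin k) :
    (jetMatrix v l j).IsHomogeneous ((l + 1) * d) := by
  rw [jetMatrix_apply_eq_sum]
  refine MvPolynomial.IsHomogeneous.sum _ _ _ fun a _ => ?_
  split_ifs
  · simpa using MvPolynomial.IsHomogeneous.prod Finset.univ _ _ fun t _ => hv (a t)
  · exact MvPolynomial.isHomogeneous_zero _ _ _

lemma isUpperTriangular_jetMatrix (v : Fin k → R) : (jetMatrix v).IsUpperTriangular := by
  intro l j (hjl : j < l)
  exact X_pow_dvd_iff.mp (pow_dvd_pow_of_dvd (X_dvd_jetPoly v) (l + 1)) (j + 1) (by omega)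

section NeZero

variable [NeZero k]

lemma row_jetMatrix_zero (v : Fin k → R) : (jetMatrix v).row 0 = v := by
  simpa [row_jetMatrix] using jetCoeff_jetPoly v

lemma jetMatrix_apply_self (v : Fin k → R) (l : Fin k) :
    jetMatrix v l l = v 0 ^ (l + 1 : ℕ) := by
  obtain ⟨q, hq⟩ := X_dvd_jetPoly v
  have hv : v 0 = q.coeff 0 := by
    rw [← congrFun (jetCoeff_jetPoly v) 0, jetCoeff, hq]
    simp
  simp [jetMatrix, jetCoeff, hq, mul_pow, hv, coeff_X_pow_mul', coeff_zero_eq_eval_zero]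

lemma isUnit_jetMatrix_iff (v : Fin k → R) : IsUnit (jetMatrix v) ↔ IsUnit (v 0) := by
  simp_rw [isUnit_iff_isUnit_det, det_of_isUpperTriangular (isUpperTriangular_jetMatrix v),
    jetMatrix_apply_self, Finset.prod_pow_eq_pow_sum]
  exact isUnit_pow_iff (Finset.sum_pos (fun _ _ => Nat.succ_pos _) ⟨0, Finset.mem_univ _⟩).ne'

lemma jetMatrix_single_zero : jetMatrix (Pi.single (0 : Fin k) (1 : R)) = 1 := by
  have h : jetPoly (Pi.single (0 : Fin k) (1 : R)) = X := by
    simp [jetPoly, Pi.single_apply, apply_ite (C : R → R[X]), ite_mul]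
  ext l j
  simp [jetMatrix, jetCoeff, h, coeff_X_pow, Matrix.one_apply, Fin.val_inj, eq_comm]

lemma inv_jetMatrix {v : Fin k → R} (hv : IsUnit (jetMatrix v)) :
    (jetMatrix v)⁻¹ = jetMatrix ((jetMatrix v)⁻¹.row 0) := by
  refine inv_eq_left_inv ?_
  have h : (jetMatrix v)⁻¹.row 0 ᵥ* jetMatrix v = Pi.single 0 1 := by
    ext j
    rw [row, ← mul_apply_eq_vecMul, nonsing_inv_mul _ ((isUnit_iff_isUnit_det _).mp hv),
      one_eq_pi_single]
  rw [jetMatrix_mul, h, jetMatrix_single_zero]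

end NeZero

end Jet

section ColumnFlag

open Matrix

variable {m n R : Type*}

/-- The increasing flag spanned by the initial segments of columns of a matrix. -/
def colFlag [Semiring R] [Preorder n] (M : Matrix m n R) (j : n) : Submodule R (m → R) :=
  Submodule.span R (M.col '' Set.Iic j)

lemma colFlag_of_isTop [CommSemiring R] [Fintype n] [Preorder n] (M : Matrix m n R) {j : n}
    (hj : IsTop j) : colFlag M j = LinearMap.range M.mulVecLin := by
  rw [colFlag, hj.Iic_eq, Set.image_univ, range_mulVecLin]

lemma colFlag_mul_le [CommSemiring R] [Fintype n] [LinearOrder n] (M : Matrix m n R)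
    {T : Matrix n n R} (hT : T.IsUpperTriangular) : colFlag (M * T) ≤ colFlag M := by
  refine fun j => Submodule.span_le.mpr ?_
  rintro _ ⟨i, hij, rfl⟩
  have hcol : (M * T).col i = ∑ s, T s i • M.col s := by
    ext r
    simp [mul_apply, mul_comm]
  rw [SetLike.mem_coe, hcol]
  refine Submodule.sum_mem _ fun s _ => ?_
  rcases le_or_gt s i with hsi | his
  · exact Submodule.smul_mem _ _ (Submodule.subset_span ⟨s, hsi.trans hij, rfl⟩)
  · simp [hT his]

lemma colFlag_mul_of_isUnit [CommRing R] [Fintype n] [LinearOrder n] (M : Matrix m n R)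
    {T : Matrix n n R} (hT : T.IsUpperTriangular) (hTu : IsUnit T) :
    colFlag (M * T) = colFlag M := by
  have := hTu.invertible
  refine le_antisymm (colFlag_mul_le M hT) ?_
  simpa [Matrix.mul_assoc] using
    colFlag_mul_le (M * T) (blockTriangular_inv_of_blockTriangular hT)

end ColumnFlag

lemma exists_eq_mul_of_range_mulVecLin_le {m n o R : Type*} [CommSemiring R] [Fintype n]
    [Fintype o] {M : Matrix m n R} {N : Matrix m o R}
    (h : LinearMap.range M.mulVecLin ≤ LinearMap.range N.mulVecLin) :
    ∃ B : Matrix o n R, M = N * B := by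
  classical
  choose b hb using fun j : n => h ⟨Pi.single j 1, rfl⟩
  refine ⟨Matrix.of fun i j => b j i, ?_⟩
  ext r j
  have := congrFun (hb j) r
  simp only [Matrix.mulVecLin_apply, Matrix.mulVec_single_one] at this
  exact this.symm

section GenericCurve

open Matrix MvPolynomial

variable {σ κ R : Type*} [Fintype σ] [CommSemiring R]

/-- The curve `γ` paired with the generic linear form on `R^σ`: its entries are the columns of `γ`
as elements of degree one of the symmetric algebra. -/
noncomputable def genericCurve (γ : Matrix σ κ R) : κ → MvPolynomial σ R := X ᵥ* γ.map C

lemma isHomogeneous_genericCurve (γ : Matrix σ κ R) (j : κ) : (genericCurve γ j).IsHomogeneous 1 :=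
  IsHomogeneous.sum _ _ _ fun i _ => (isHomogeneous_X R i).mul (isHomogeneous_C _ (γ i j))

lemma genericCurve_mul {τ : Type*} [Fintype κ] (γ : Matrix σ κ R) (A : Matrix κ τ R) :
    genericCurve (γ * A) = genericCurve γ ᵥ* A.map C := by
  rw [genericCurve, genericCurve, Matrix.map_mul, vecMul_vecMul]

lemma eval_comp_genericCurve (x : σ → R) (γ : Matrix σ κ R) :
    eval x ∘ genericCurve γ = x ᵥ* γ := by
  ext j
  simp [genericCurve, vecMul, dotProduct]

end GenericCurve

section SymForm

open Matrix

variable {R : Type*} {n k : ℕ}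

/-- The matrix of the map `Sym^{≤k} R^n → Sym^{≤k} R = R^k` induced by the linear form `x` on
`R^n`: a monomial of degree `l + 1` is sent to its value at `x` in the `l`-th coordinate. -/
def symFormMat [CommSemiring R] (k : ℕ) (x : Fin n → R) : Matrix (Fin k) (Mon n k) R :=
  Matrix.of fun l m => if ∑ i, m.1 i = l + 1 then ∏ i, x i ^ m.1 i else 0

lemma symFormMat_mulVec_coeff [CommSemiring R] (x : Fin n → R) (p : MvPolynomial (Fin n) R)
    (l : Fin k) :
    (symFormMat k x *ᵥ fun m => p.coeff (Finsupp.equivFunOnFinite.symm m.1)) l =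
      MvPolynomial.eval x (MvPolynomial.homogeneousComponent (l + 1) p) := by
  let e : Mon n k ↪ (Fin n →₀ ℕ) :=
    ⟨fun m => Finsupp.equivFunOnFinite.symm m.1,
      fun _ _ h => Subtype.ext (Finsupp.equivFunOnFinite.symm.injective h)⟩
  have hsupport : (MvPolynomial.homogeneousComponent (l + 1) p).support ⊆
      Finset.univ.map e := by
    intro d hd
    have hdegree : ∑ i, d i = l + 1 := by
      rw [← Finsupp.degree_eq_sum]
      by_contra h
      simp [MvPolynomial.coeff_homogeneousComponent, h] at hd
    exact Finset.mem_map.mpr ⟨⟨d, by omega, by omega⟩, Finset.mem_univ _, by ext; rfl⟩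
  have he (m : Mon n k) : e m = Finsupp.equivFunOnFinite.symm m.1 := rfl
  rw [MvPolynomial.eval_eq', Finset.sum_subset hsupport, Finset.sum_map]
  · refine Finset.sum_congr rfl fun m _ => ?_
    simp [he, symFormMat, MvPolynomial.coeff_homogeneousComponent, Finsupp.degree_eq_sum,
      mul_comm]
  · intro d _ hd
    rw [MvPolynomial.notMem_support_iff.mp hd, zero_mul]

end SymForm

section Phi

open Matrix MvPolynomial

variable {n k : ℕ}

lemma repMat_eq_jetMatrix (α : Fin k → ℂ) : repMat k α = jetMatrix α := by
  ext l j
  exact (jetMatrix_apply_eq_sum α l j).symm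

lemma flagPhi_eq_colFlag (γ : Matrix (Fin n) (Fin k) ℂ) : flagPhi γ = colFlag (phiMat γ) := by
  ext1 j
  rw [flagPhi, colFlag]
  congr 1
  ext v
  exact exists_congr fun i => and_congr_right fun _ => eq_comm

lemma colPoly_eq_one_vecMul (γ : Matrix (Fin n) (Fin k) ℂ) :
    colPoly γ = 1 ᵥ* jetMatrix (genericCurve γ) := by
  ext1 j
  have hcol (i : Fin k) : ∑ r, γ r i • X r = genericCurve γ i := by
    simp [genericCurve, vecMul, dotProduct, smul_eq_C_mul, mul_comm]
  simp only [colPoly, hcol, vecMul, dotProduct, Pi.one_apply, one_mul, jetMatrix_apply_eq_sum]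

theorem phiMat_mul_jetMatrix (γ : Matrix (Fin n) (Fin k) ℂ) (α : Fin k → ℂ) :
    phiMat (γ * jetMatrix α) = phiMat γ * jetMatrix α := by
  have hcol : colPoly (γ * jetMatrix α) = colPoly γ ᵥ* (jetMatrix α).map C := by
    rw [colPoly_eq_one_vecMul, colPoly_eq_one_vecMul, genericCurve_mul, jetMatrix_map,
      vecMul_vecMul, jetMatrix_mul]
  ext m j
  simp only [phiMat, hcol, vecMul, dotProduct, Matrix.map_apply, MvPolynomial.coeff_sum,
    mul_comm (colPoly γ _), MvPolynomial.coeff_C_mul, mul_apply, mul_comm (coeff _ _)]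

lemma homogeneousComponent_colPoly (γ : Matrix (Fin n) (Fin k) ℂ) (l j : Fin k) :
    homogeneousComponent (l + 1) (colPoly γ j) = jetMatrix (genericCurve γ) l j := by
  have h (i : Fin k) : homogeneousComponent (l + 1 : ℕ) (jetMatrix (genericCurve γ) i j) =
      if l = i then jetMatrix (genericCurve γ) i j else 0 := by
    rw [homogeneousComponent_of_mem
      (isHomogeneous_jetMatrix_apply (isHomogeneous_genericCurve γ) i j)]
    simp [Fin.val_inj]
  simp [colPoly_eq_one_vecMul, vecMul, dotProduct, h]

theorem symFormMat_mul_phiMat (x : Fin n → ℂ) (γ : Matrix (Fin n) (Fin k) ℂ) :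
    symFormMat k x * phiMat γ = jetMatrix (x ᵥ* γ) := by
  ext l j
  calc (symFormMat k x * phiMat γ) l j
      = eval x (homogeneousComponent (l + 1) (colPoly γ j)) :=
        symFormMat_mulVec_coeff x (colPoly γ j) l
    _ = (jetMatrix (genericCurve γ)).map (eval x) l j := by
        rw [homogeneousComponent_colPoly, map_apply]
    _ = jetMatrix (x ᵥ* γ) l j := by
        rw [jetMatrix_map, eval_comp_genericCurve]

lemma jetMatrix_vecMul_of_phiMat_eq_mul {γ₁ γ₂ : Matrix (Fin n) (Fin k) ℂ}
    {B : Matrix (Fin k) (Fin k) ℂ} (h : phiMat γ₁ = phiMat γ₂ * B) (x : Fin n → ℂ) :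
    jetMatrix (x ᵥ* γ₁) = jetMatrix (x ᵥ* γ₂) * B := by
  rw [← symFormMat_mul_phiMat, ← symFormMat_mul_phiMat, h, Matrix.mul_assoc]

section NeZero

variable [NeZero k]

lemma mem_Gset_iff {ψ : Matrix (Fin k) (Fin k) ℂ} :
    ψ ∈ Gset k ↔ IsUnit ψ ∧ ∃ α, ψ = jetMatrix α := by
  have hzero (α : Fin k → ℂ) : (∀ i : Fin k, i.val = 0 → α i ≠ 0) ↔ IsUnit (jetMatrix α) := by
    simp [isUnit_jetMatrix_iff, Fin.val_eq_zero_iff]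
  simp only [Gset, Set.mem_ofPred_eq, hzero, repMat_eq_jetMatrix]
  constructor
  · rintro ⟨α, hα, rfl⟩
    exact ⟨hα, α, rfl⟩
  · rintro ⟨hα, α, rfl⟩
    exact ⟨α, hα, rfl⟩

lemma exists_isUnit_jetMatrix_vecMul {γ : Matrix (Fin n) (Fin k) ℂ} (hγ : ∃ i, γ i 0 ≠ 0) :
    ∃ x : Fin n → ℂ, IsUnit (jetMatrix (x ᵥ* γ)) := by
  obtain ⟨i, hi⟩ := hγ
  exact ⟨Pi.single i 1, by simpa [isUnit_jetMatrix_iff] using hi⟩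

theorem rank_phiMat {γ : Matrix (Fin n) (Fin k) ℂ} (hγ : ∃ i, γ i 0 ≠ 0) :
    (phiMat γ).rank = k := by
  obtain ⟨x, hx⟩ := exists_isUnit_jetMatrix_vecMul hγ
  refine le_antisymm ((phiMat γ).rank_le_card_width.trans_eq (Fintype.card_fin k)) ?_
  calc k = (symFormMat k x * phiMat γ).rank := by
        rw [symFormMat_mul_phiMat, rank_of_isUnit _ hx, Fintype.card_fin]
    _ ≤ (phiMat γ).rank := rank_mul_le_right _ _

lemma eq_mul_of_phiMat_eq_mul {γ₁ γ₂ : Matrix (Fin n) (Fin k) ℂ}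
    {B : Matrix (Fin k) (Fin k) ℂ} (h : phiMat γ₁ = phiMat γ₂ * B) : γ₁ = γ₂ * B := by
  refine Matrix.ext_of_single_vecMul fun i => ?_
  calc Pi.single i 1 ᵥ* γ₁
      = (jetMatrix (Pi.single i 1 ᵥ* γ₁)).row 0 := (row_jetMatrix_zero _).symm
    _ = (jetMatrix (Pi.single i 1 ᵥ* γ₂)).row 0 ᵥ* B := by
        rw [jetMatrix_vecMul_of_phiMat_eq_mul h]
        exact mul_apply_eq_vecMul _ _ _
    _ = Pi.single i 1 ᵥ* (γ₂ * B) := by rw [row_jetMatrix_zero, vecMul_vecMul]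

lemma mem_Gset_of_phiMat_eq_mul {γ₁ γ₂ : Matrix (Fin n) (Fin k) ℂ}
    {B : Matrix (Fin k) (Fin k) ℂ} (hγ₁ : ∃ i, γ₁ i 0 ≠ 0) (h : phiMat γ₁ = phiMat γ₂ * B) :
    B ∈ Gset k := by
  obtain ⟨x, hx⟩ := exists_isUnit_jetMatrix_vecMul hγ₁
  have hB := jetMatrix_vecMul_of_phiMat_eq_mul h x
  rw [hB] at hx
  have hx₂ : IsUnit (jetMatrix (x ᵥ* γ₂)) := isUnit_of_mul_isUnit_left hx
  have hB' : B = (jetMatrix (x ᵥ* γ₂))⁻¹ * jetMatrix (x ᵥ* γ₁) := by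
    rw [hB, nonsing_inv_mul_cancel_left _ _ ((isUnit_iff_isUnit_det _).mp hx₂)]
  rw [inv_jetMatrix hx₂, jetMatrix_mul] at hB'
  exact mem_Gset_iff.mpr ⟨isUnit_of_mul_isUnit_right hx, _, hB'⟩

theorem exists_mem_Gset_of_range_phiMat_le {γ₁ γ₂ : Matrix (Fin n) (Fin k) ℂ}
    (hγ₁ : ∃ i, γ₁ i 0 ≠ 0)
    (h : LinearMap.range (phiMat γ₁).mulVecLin ≤ LinearMap.range (phiMat γ₂).mulVecLin) :
    ∃ ψ ∈ Gset k, γ₁ = γ₂ * ψ := by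
  obtain ⟨B, hB⟩ := exists_eq_mul_of_range_mulVecLin_le h
  exact ⟨B, mem_Gset_of_phiMat_eq_mul hγ₁ hB, eq_mul_of_phiMat_eq_mul hB⟩

theorem flagPhi_mul_of_mem_Gset (γ : Matrix (Fin n) (Fin k) ℂ) {ψ : Matrix (Fin k) (Fin k) ℂ}
    (hψ : ψ ∈ Gset k) : flagPhi (γ * ψ) = flagPhi γ := by
  obtain ⟨hu, α, rfl⟩ := mem_Gset_iff.mp hψ
  rw [flagPhi_eq_colFlag, flagPhi_eq_colFlag, phiMat_mul_jetMatrix,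
    colFlag_mul_of_isUnit _ (isUpperTriangular_jetMatrix α) hu]

end NeZero

lemma flagPhi_of_isTop (γ : Matrix (Fin n) (Fin k) ℂ) {j : Fin k} (hj : IsTop j) :
    flagPhi γ j = LinearMap.range (phiMat γ).mulVecLin := by
  rw [flagPhi_eq_colFlag, colFlag_of_isTop _ hj]

end Phi

/-- `φ(γ)` has rank `k` for regular `γ`; `im φ(γ∘ψ) = im φ(γ)` for
`ψ ∈ 𝔾_k`; the induced maps `φ^{Gr}` to the Grassmannian and `φ^{Flag}` to the flag
manifold are injective on `𝔾_k`-orbits; and `φ^{Gr} = π_k ∘ φ^{Flag}`. -/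
theorem phi_descends_injectively (n k : ℕ) (hk : 1 ≤ k) (hn : 1 ≤ n) :
    -- φ(γ) has rank k for every regular γ
    (∀ γ : Matrix (Fin n) (Fin k) ℂ, (∃ i, γ i ⟨0, hk⟩ ≠ 0) → (phiMat γ).rank = k) ∧
    -- the image subspace is invariant under precomposition with ψ ∈ 𝔾_k
    (∀ γ : Matrix (Fin n) (Fin k) ℂ, (∃ i, γ i ⟨0, hk⟩ ≠ 0) → ∀ ψ ∈ Gset k,
      LinearMap.range (Matrix.mulVecLin (phiMat (γ * ψ))) =
        LinearMap.range (Matrix.mulVecLin (phiMat γ))) ∧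
    -- φ^{Gr} is injective on 𝔾_k-orbits
    (∀ γ₁ γ₂ : Matrix (Fin n) (Fin k) ℂ,
      (∃ i, γ₁ i ⟨0, hk⟩ ≠ 0) → (∃ i, γ₂ i ⟨0, hk⟩ ≠ 0) →
      LinearMap.range (Matrix.mulVecLin (phiMat γ₁)) =
        LinearMap.range (Matrix.mulVecLin (phiMat γ₂)) →
      ∃ ψ ∈ Gset k, γ₁ = γ₂ * ψ) ∧
    -- the flag is invariant under precomposition with ψ ∈ 𝔾_k
    (∀ γ : Matrix (Fin n) (Fin k) ℂ, (∃ i, γ i ⟨0, hk⟩ ≠ 0) → ∀ ψ ∈ Gset k,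
      flagPhi (γ * ψ) = flagPhi γ) ∧
    -- φ^{Flag} is injective on 𝔾_k-orbits
    (∀ γ₁ γ₂ : Matrix (Fin n) (Fin k) ℂ,
      (∃ i, γ₁ i ⟨0, hk⟩ ≠ 0) → (∃ i, γ₂ i ⟨0, hk⟩ ≠ 0) →
      flagPhi γ₁ = flagPhi γ₂ → ∃ ψ ∈ Gset k, γ₁ = γ₂ * ψ) ∧
    -- φ^{Gr} = π_k ∘ φ^{Flag}: the top member of the flag is the image of φ(γ)
    (∀ γ : Matrix (Fin n) (Fin k) ℂ, (∃ i, γ i ⟨0, hk⟩ ≠ 0) →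
      flagPhi γ ⟨k - 1, by omega⟩ = LinearMap.range (Matrix.mulVecLin (phiMat γ))) := by
  have : NeZero k := ⟨by omega⟩
  have htop (γ : Matrix (Fin n) (Fin k) ℂ) :
      flagPhi γ ⟨k - 1, by omega⟩ = LinearMap.range (phiMat γ).mulVecLin :=
    flagPhi_of_isTop γ fun i => Nat.le_sub_one_of_lt i.isLt
  refine ⟨fun γ hγ => rank_phiMat hγ, fun γ _ ψ hψ => ?_,
    fun γ₁ γ₂ hγ₁ _ h => exists_mem_Gset_of_range_phiMat_le hγ₁ h.le,
    fun γ _ ψ hψ => flagPhi_mul_of_mem_Gset γ hψ, fun γ₁ γ₂ hγ₁ _ h => ?_, fun γ _ => htop γ⟩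
  · rw [← htop, ← htop, flagPhi_mul_of_mem_Gset γ hψ]
  · refine exists_mem_Gset_of_range_phiMat_le hγ₁ (le_of_eq ?_)
    rw [← htop, ← htop, h]

end JetPaper
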